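/- Fix α = 0.981, an integer d ≥ 2, and integers w_1,…,w_d ≥ 1. Suppose i ≠ j are indices with w_i = w_j and w_i ≤ 2. For t ∈ (0,1/2]^d, define t' by t'_k = t_k for k ∉ {i,j} and t'_i = t'_j = 2^{w_i−1}·(1 − √(ĥ(t_i,w_i)·ĥ(t_j,w_j))). Then κ_d^{(w_1,…,w_d)}(t) ≤ κ_d^{(w_1,…,w_d)}(t'). -/

import Mathlib

open Finset

/-- `α^{-⌈log_4 (w+1)⌉}` with `α = 0.981`; for `w ≥ 1`, `⌈log_4 (w+1)⌉ = Nat.clog 4 (w+1)`. -/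
noncomputable def amort (w : ℕ) : ℝ := (0.981 : ℝ) ^ (-(Nat.clog 4 (w + 1) : ℤ))

/-- `T(t,w) = (t/2^{w−1})/(1 − t/2^{w−1}) · ((1−t)/√t + (w−1)/√2)`. -/
noncomputable def Tfun (t : ℝ) (w : ℕ) : ℝ :=
  (t / 2 ^ (w - 1)) / (1 - t / 2 ^ (w - 1)) * ((1 - t) / Real.sqrt t + ((w : ℝ) - 1) / Real.sqrt 2)

/-- `g(h) = √(h/(1+h))`. -/
noncomputable def gfun (h : ℝ) : ℝ := Real.sqrt (h / (1 + h))

/-- `ĥ(t,w) = 1 − t/2^{w−1}`. -/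
noncomputable def hhat (t : ℝ) (w : ℕ) : ℝ := 1 - t / 2 ^ (w - 1)

/-- The single-layer decay rate
`κ_d^{(w_1,…,w_d)}(t) = g(∏_j ĥ(t_j,w_j)) · Σ_a T(t_a,w_a) · α^{−⌈log_4(w_a+1)⌉}`. -/
noncomputable def kap (d : ℕ) (w : Fin d → ℕ) (t : Fin d → ℝ) : ℝ :=
  gfun (∏ j, hhat (t j) (w j)) * ∑ a, Tfun (t a) (w a) * amort (w a)

/- Replacing `t_i`, `t_j` by the value `t'` whose `ĥ` is the geometric mean of `ĥ(t_i)` and `ĥ(t_j)`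
leaves `∏ ĥ`, hence the factor `g`, unchanged, so the claim reduces to `T(t_i) + T(t_j) ≤ 2 T(t')`.
As `ĥ` is affine and decreasing, AM–GM says that `t'` is at least the midpoint of `t_i` and `t_j`,
and the inequality holds because `T(·, w)` is concave and increasing for `w ≤ 2`: there
`T(t, 1) = √t` and `T(t, 2) = (√t + t / (√2 + √t)) / 2`. -/

section Concavity

lemma concaveOn_of_exists_le_add_mul_sub {𝕜 : Type*} [CommRing 𝕜] [LinearOrder 𝕜]
    [IsStrictOrderedRing 𝕜] {s : Set 𝕜} {f : 𝕜 → 𝕜} (hs : Convex 𝕜 s)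
    (h : ∀ c ∈ s, ∃ m, ∀ x ∈ s, f x ≤ f c + m * (x - c)) : ConcaveOn 𝕜 s f := by
  refine ⟨hs, fun x hx y hy a b ha hb hab => ?_⟩
  obtain ⟨m, hm⟩ := h _ (hs hx hy ha hb hab)
  simp only [smul_eq_mul] at hm ⊢
  set c := a * x + b * y with hc
  calc a * f x + b * f y
      ≤ a * (f c + m * (x - c)) + b * (f c + m * (y - c)) := by
        gcongr
        exacts [hm x hx, hm y hy]
    _ = (a + b) * f c + m * (c - (a + b) * c) := by
        rw [hc]
        ring
    _ = f c := by
        rw [hab]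
        ring

lemma add_le_two_mul_of_concaveOn_of_monotoneOn {𝕜 : Type*} [Field 𝕜] [LinearOrder 𝕜]
    [IsStrictOrderedRing 𝕜] {s : Set 𝕜} {f : 𝕜 → 𝕜} (hconc : ConcaveOn 𝕜 s f)
    (hmono : MonotoneOn f s) {x y z : 𝕜} (hx : x ∈ s) (hy : y ∈ s) (hz : z ∈ s)
    (hxyz : (x + y) / 2 ≤ z) : f x + f y ≤ 2 * f z := by
  have hhalf : (0 : 𝕜) ≤ 1 / 2 := by positivity
  have hmem := hconc.1 hx hy hhalf hhalf (add_halves 1)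
  have hmid := hconc.2 hx hy hhalf hhalf (add_halves 1)
  simp only [smul_eq_mul] at hmem hmid
  have hle := hmono hmem hz (by linarith)
  linarith

lemma concaveOn_div_add_sqrt {a : ℝ} (ha : 0 < a) :
    ConcaveOn ℝ (Set.Ici 0) fun x => x / (a + √x) := by
  refine concaveOn_of_exists_le_add_mul_sub (convex_Ici 0) fun c hc =>
    ⟨(2 * a + √c) / (2 * (a + √c) ^ 2), fun x hx => ?_⟩
  obtain ⟨q, hq, rfl⟩ : ∃ q, 0 ≤ q ∧ q ^ 2 = c := ⟨√c, Real.sqrt_nonneg c, Real.sq_sqrt hc⟩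
  obtain ⟨p, hp, rfl⟩ : ∃ p, 0 ≤ p ∧ p ^ 2 = x := ⟨√x, Real.sqrt_nonneg x, Real.sq_sqrt hx⟩
  simp only [Real.sqrt_sq hq, Real.sqrt_sq hp]
  have hgap : q ^ 2 / (a + q) + (2 * a + q) / (2 * (a + q) ^ 2) * (p ^ 2 - q ^ 2) - p ^ 2 / (a + p)
      = (p - q) ^ 2 * ((2 * a + q) * p + a * q) / (2 * (a + q) ^ 2 * (a + p)) := by
    field_simp
    ring
  rw [← sub_nonneg, hgap]
  positivity

lemma monotoneOn_div_add_sqrt {a : ℝ} (ha : 0 < a) :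
    MonotoneOn (fun x => x / (a + √x)) (Set.Ici 0) := by
  intro x hx y hy hxy
  have hcross : x * √y ≤ y * √x := by
    calc x * √y = √x * √y * √x := by rw [mul_right_comm, Real.mul_self_sqrt hx]
      _ ≤ √x * √y * √y := by gcongr
      _ = y * √x := by rw [mul_assoc, Real.mul_self_sqrt hy, mul_comm]
  change x / (a + √x) ≤ y / (a + √y)
  rw [div_le_div_iff₀ (by positivity) (by positivity), mul_add, mul_add]
  gcongr

end Concavity

section LayerTerm

lemma Tfun_one {t : ℝ} (ht : t ≠ 1) : Tfun t 1 = √t :=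
  calc Tfun t 1 = t / (1 - t) * ((1 - t) / √t) := by simp [Tfun]
    _ = t / √t := div_mul_div_cancel₀ (sub_ne_zero.2 ht.symm)
    _ = √t := Real.div_sqrt

lemma Tfun_two {t : ℝ} (ht : 0 < t) (ht2 : t ≠ 2) : Tfun t 2 = (√t + t / (√2 + √t)) / 2 := by
  have hne : 2 - t ≠ 0 := sub_ne_zero.2 ht2.symm
  have hsq : √t ^ 2 = t := Real.sq_sqrt ht.le
  have hsq2 : √2 ^ 2 = (2 : ℝ) := Real.sq_sqrt zero_le_two
  have hratio : t / 2 / (1 - t / 2) = t / (2 - t) := by grind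
  have hden : 2 - t = (√2 - √t) * (√2 + √t) := by linear_combination hsq - hsq2
  have hnum : (1 - t) / √t + 1 / √2 = (√2 - √t) * (1 + √2 * √t) / (√2 * √t) := by
    field_simp
    linear_combination √2 * hsq - √t * hsq2
  have hcancel : √2 - √t ≠ 0 := left_ne_zero_of_mul (hden ▸ hne)
  calc Tfun t 2 = t / (2 - t) * ((1 - t) / √t + 1 / √2) := by
        rw [Tfun, ← hratio]
        norm_num
    _ = √t * (1 + √2 * √t) / (√2 * (√2 + √t)) := by
        rw [hnum, hden]
        field_simp
        rw [hsq]
    _ = (√t + t / (√2 + √t)) / 2 := by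
        field_simp
        linear_combination √2 * hsq - √t * hsq2

variable {w : ℕ}

lemma concaveOn_Tfun (hw : 1 ≤ w) (hw2 : w ≤ 2) :
    ConcaveOn ℝ (Set.Ioo 0 (2 ^ (w - 1))) fun t => Tfun t w := by
  have hsqrt : ConcaveOn ℝ (Set.Ici 0) fun t => √t := Real.strictConcaveOn_sqrt.concaveOn
  have hsub (b : ℝ) : Set.Ioo 0 b ⊆ Set.Ici 0 := fun t ht => ht.1.le
  interval_cases w
  · refine (hsqrt.subset (hsub _) (convex_Ioo _ _)).congr fun t ht => ?_
    rw [Tfun_one (by simpa using ht.2.ne)]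
  · have hconc := (hsqrt.add (concaveOn_div_add_sqrt (Real.sqrt_pos.2 two_pos))).smul
      (inv_nonneg.2 zero_le_two : (0 : ℝ) ≤ 2⁻¹)
    refine (hconc.subset (hsub _) (convex_Ioo _ _)).congr fun t ht => ?_
    rw [Tfun_two ht.1 (by simpa using ht.2.ne), div_eq_inv_mul]
    rfl

lemma monotoneOn_Tfun (hw : 1 ≤ w) (hw2 : w ≤ 2) :
    MonotoneOn (fun t => Tfun t w) (Set.Ioo 0 (2 ^ (w - 1))) := by
  intro x hx y hy hxy
  change Tfun x w ≤ Tfun y w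
  interval_cases w
  · rw [Tfun_one (by simpa using hx.2.ne), Tfun_one (by simpa using hy.2.ne)]
    gcongr
  · rw [Tfun_two hx.1 (by simpa using hx.2.ne), Tfun_two hy.1 (by simpa using hy.2.ne)]
    gcongr ?_ / 2
    exact add_le_add (Real.sqrt_le_sqrt hxy)
      (monotoneOn_div_add_sqrt (Real.sqrt_pos.2 two_pos) hx.1.le hy.1.le hxy)

end LayerTerm

section Merging

lemma sqrt_mul_le_half_add {x y : ℝ} (h : 0 ≤ x + y) : √(x * y) ≤ (x + y) / 2 :=
  Real.sqrt_le_iff.2 ⟨by positivity, by linarith [sq_nonneg (x - y)]⟩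

/-- The common value `t'` that replaces two arguments `x`, `y` of weight `w` in the merging step;
it is the point at which `ĥ(·, w)` is the geometric mean of `ĥ(x, w)` and `ĥ(y, w)`. -/
noncomputable def mergedValue (x y : ℝ) (w : ℕ) : ℝ :=
  2 ^ (w - 1) * (1 - √(hhat x w * hhat y w))

variable {w : ℕ} {x y t : ℝ}

lemma hhat_mergedValue (x y : ℝ) (w : ℕ) :
    hhat (mergedValue x y w) w = √(hhat x w * hhat y w) := by
  rw [hhat, mergedValue, mul_div_cancel_left₀ _ (by positivity), sub_sub_cancel]

lemma hhat_mem_Ioo_iff : hhat t w ∈ Set.Ioo 0 1 ↔ t ∈ Set.Ioo 0 (2 ^ (w - 1)) := by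
  have hpow : (0 : ℝ) < 2 ^ (w - 1) := by positivity
  rw [hhat, Set.mem_Ioo, Set.mem_Ioo, sub_pos, div_lt_one hpow, sub_lt_self_iff,
    div_pos_iff_of_pos_right hpow, and_comm]

lemma mergedValue_mem_Ioo (hx : x ∈ Set.Ioo 0 (2 ^ (w - 1))) (hy : y ∈ Set.Ioo 0 (2 ^ (w - 1))) :
    mergedValue x y w ∈ Set.Ioo 0 (2 ^ (w - 1)) := by
  rw [← hhat_mem_Ioo_iff] at hx hy ⊢
  rw [hhat_mergedValue]
  have hlt : hhat x w * hhat y w < 1 := mul_lt_one_of_nonneg_of_lt_one_left hx.1.le hx.2 hy.2.le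
  exact ⟨Real.sqrt_pos.2 (mul_pos hx.1 hy.1), (Real.sqrt_lt' one_pos).2 (by rwa [one_pow])⟩

lemma half_add_le_mergedValue (h : 0 ≤ hhat x w + hhat y w) :
    (x + y) / 2 ≤ mergedValue x y w := by
  calc (x + y) / 2 = 2 ^ (w - 1) * (1 - (hhat x w + hhat y w) / 2) := by
        unfold hhat
        field_simp
        ring
    _ ≤ mergedValue x y w := by
        unfold mergedValue
        gcongr
        exact sqrt_mul_le_half_add h

lemma Tfun_add_Tfun_le_two_mul_Tfun_mergedValue (hw : 1 ≤ w) (hw2 : w ≤ 2)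
    (hx : x ∈ Set.Ioo 0 (2 ^ (w - 1))) (hy : y ∈ Set.Ioo 0 (2 ^ (w - 1))) :
    Tfun x w + Tfun y w ≤ 2 * Tfun (mergedValue x y w) w :=
  add_le_two_mul_of_concaveOn_of_monotoneOn (concaveOn_Tfun hw hw2) (monotoneOn_Tfun hw hw2) hx hy
    (mergedValue_mem_Ioo hx hy) (half_add_le_mergedValue
      (add_nonneg (hhat_mem_Ioo_iff.2 hx).1.le (hhat_mem_Ioo_iff.2 hy).1.le))

end Merging

section DecayRate

@[to_additive]
lemma prod_eq_mul_mul_prod_compl_pair {ι M : Type*} [Fintype ι] [DecidableEq ι] [CommMonoid M]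
    {i j : ι} (hij : i ≠ j) (f : ι → M) : ∏ k, f k = f i * f j * ∏ k ∈ {i, j}ᶜ, f k := by
  rw [← prod_pair hij, prod_mul_prod_compl]

lemma amort_nonneg (w : ℕ) : 0 ≤ amort w := by
  unfold amort
  positivity

lemma kap_le_kap_of_eqOn_compl_pair {d : ℕ} {w : Fin d → ℕ} {i j : Fin d} (hij : i ≠ j)
    {s t : Fin d → ℝ} (hst : ∀ k ∈ ({i, j} : Finset (Fin d))ᶜ, s k = t k)
    (hprod : hhat (s i) (w i) * hhat (s j) (w j) = hhat (t i) (w i) * hhat (t j) (w j))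
    (hsum : Tfun (s i) (w i) * amort (w i) + Tfun (s j) (w j) * amort (w j) ≤
      Tfun (t i) (w i) * amort (w i) + Tfun (t j) (w j) * amort (w j)) :
    kap d w s ≤ kap d w t := by
  have hprod_eq : ∏ k, hhat (s k) (w k) = ∏ k, hhat (t k) (w k) := by
    rw [prod_eq_mul_mul_prod_compl_pair hij, prod_eq_mul_mul_prod_compl_pair hij, hprod]
    exact congrArg _ (prod_congr rfl fun k hk => by rw [hst k hk])
  have hsum_le : ∑ k, Tfun (s k) (w k) * amort (w k) ≤ ∑ k, Tfun (t k) (w k) * amort (w k) := by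
    rw [sum_eq_add_add_sum_compl_pair hij, sum_eq_add_add_sum_compl_pair hij]
    exact add_le_add hsum (sum_le_sum fun k hk => by rw [hst k hk])
  rw [kap, kap, hprod_eq]
  exact mul_le_mul_of_nonneg_left hsum_le (Real.sqrt_nonneg _)

end DecayRate

theorem stmt16_general (d : ℕ) (w : Fin d → ℕ) (hw : ∀ k, 1 ≤ w k) (i j : Fin d) (hij : i ≠ j)
    (hwij : w i = w j) (hwi : w i ≤ 2) (t : Fin d → ℝ)
    (ht : ∀ k, t k ∈ Set.Ioo (0 : ℝ) (2 ^ (w k - 1))) :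
    kap d w t ≤
      kap d w fun k => if k = i ∨ k = j then mergedValue (t i) (t j) (w i) else t k := by
  have htj : t j ∈ Set.Ioo (0 : ℝ) (2 ^ (w i - 1)) := hwij ▸ ht j
  have hhat_nonneg : 0 ≤ hhat (t i) (w i) * hhat (t j) (w i) :=
    mul_nonneg (hhat_mem_Ioo_iff.2 (ht i)).1.le (hhat_mem_Ioo_iff.2 htj).1.le
  refine kap_le_kap_of_eqOn_compl_pair hij (fun k hk => ?_) ?_ ?_
  · rw [if_neg (by simpa using hk)]
  · simp only [true_or, or_true, if_true, ← hwij]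
    rw [hhat_mergedValue, Real.mul_self_sqrt hhat_nonneg]
  · simp only [true_or, or_true, if_true, ← hwij]
    rw [← add_mul, ← add_mul, ← two_mul]
    exact mul_le_mul_of_nonneg_right
      (Tfun_add_Tfun_le_two_mul_Tfun_mergedValue (hw i) hwi (ht i) htj) (amort_nonneg _)

/-- merging two coordinates `i ≠ j` with equal weights `w_i = w_j ≤ 2` into the
common value `2^{w_i−1}·(1 − √(ĥ(t_i,w_i)·ĥ(t_j,w_j)))` does not decrease `κ`. -/
theorem stmt16 (d : ℕ) (hd : 2 ≤ d) (w : Fin d → ℕ) (hw : ∀ k, 1 ≤ w k)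
    (i j : Fin d) (hij : i ≠ j) (hwij : w i = w j) (hwi : w i ≤ 2)
    (t : Fin d → ℝ) (ht : ∀ k, t k ∈ Set.Ioc (0 : ℝ) (1 / 2)) :
    kap d w t ≤ kap d w (fun k => if k = i ∨ k = j then
      2 ^ (w i - 1) * (1 - Real.sqrt (hhat (t i) (w i) * hhat (t j) (w j))) else t k) := by
  rw [← congrArg (hhat (t j)) hwij]
  exact stmt16_general d w hw i j hij hwij hwi t fun k =>
    ⟨(ht k).1, (ht k).2.trans_lt (one_half_lt_one.trans_le (one_le_pow₀ one_le_two))⟩
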